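/- Let Q̲ : (X → ℝ) → (X → ℝ) be a lower rate operator, i.e. for all f, g : X → ℝ, all λ ≥ 0, all μ ∈ ℝ, and all x, y ∈ X with y ≠ x: (i) Q̲ (μ • 1)(x) = 0, where 1 is the constant function equal to 1; (ii) Q̲ (𝟙_y)(x) ≥ 0, where 𝟙_y is the indicator function of {y}; (iii) Q̲ f + Q̲ g ≤ Q̲ (f + g) pointwise; (iv) Q̲ (λ • f) = λ • Q̲ f. Then for every f : X → ℝ there exists a rate matrix Q such that Q.mulVec g ≥ Q̲ g pointwise for every g : X → ℝ, and Q.mulVec f = Q̲ f. -/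

import Mathlib

/-- A rate matrix: off-diagonal entries nonnegative and every row sums to zero. -/
def IsRateMatrix {X : Type*} [Fintype X] (Q : Matrix X X ℝ) : Prop :=
  (∀ x y, x ≠ y → 0 ≤ Q x y) ∧ ∀ x, ∑ y, Q x y = 0

/-!
Each coordinate `g ↦ L g x` of a lower rate operator is superlinear, so by the Hahn–Banach theorem
it is dominated by a linear functional that agrees with it at `f`; these functionals are the rows
of `Q`. Domination of `L` at the indicators makes the off-diagonal entries of `Q` nonnegative, and
domination at the constants `1` and `-1` makes its rows sum to zero.
-/

open Matrix

section Superlinear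

variable {E : Type*} [AddCommGroup E] [Module ℝ E] {N : E → ℝ}

theorem map_zero_of_pos_homogeneous (N_hom : ∀ c : ℝ, 0 < c → ∀ x, N (c • x) = c * N x) :
    N 0 = 0 := by
  have h := N_hom 2 two_pos 0
  rw [smul_zero] at h
  linarith

theorem mul_le_map_smul_of_sublinear (N_hom : ∀ c : ℝ, 0 < c → ∀ x, N (c • x) = c * N x)
    (N_add : ∀ x y, N (x + y) ≤ N x + N y) (c : ℝ) (x : E) : c * N x ≤ N (c • x) := by
  have N_zero : N 0 = 0 := map_zero_of_pos_homogeneous N_hom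
  rcases lt_trichotomy c 0 with hc | rfl | hc
  · have h : N 0 ≤ N (c • x) + -c * N x :=
      calc N 0 = N (c • x + -c • x) := by rw [neg_smul, add_neg_cancel]
        _ ≤ N (c • x) + N (-c • x) := N_add _ _
        _ = N (c • x) + -c * N x := by rw [N_hom (-c) (neg_pos.mpr hc)]
    linarith
  · rw [zero_mul, zero_smul, N_zero]
  · exact (N_hom c hc x).ge

theorem exists_linearMap_le_sublinear_eq (N_hom : ∀ c : ℝ, 0 < c → ∀ x, N (c • x) = c * N x)
    (N_add : ∀ x y, N (x + y) ≤ N x + N y) (x₀ : E) :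
    ∃ φ : E →ₗ[ℝ] ℝ, (∀ x, φ x ≤ N x) ∧ φ x₀ = N x₀ := by
  have smul_eq_zero_imp (c : ℝ) (hc : c • x₀ = 0) : c • N x₀ = 0 := by
    rcases smul_eq_zero.mp hc with rfl | rfl
    · exact zero_smul ℝ _
    · rw [map_zero_of_pos_homogeneous N_hom, smul_zero]
  let φ₀ : E →ₗ.[ℝ] ℝ := .mkSpanSingleton' (σ := .id ℝ) x₀ (N x₀) smul_eq_zero_imp
  have φ₀_le (x : φ₀.domain) : φ₀ x ≤ N x := by
    obtain ⟨x, hx⟩ := x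
    obtain ⟨c, rfl⟩ := Submodule.mem_span_singleton.mp hx
    rw [LinearPMap.mkSpanSingleton'_apply]
    exact mul_le_map_smul_of_sublinear N_hom N_add c x₀
  obtain ⟨φ, φ_extends, φ_le⟩ := exists_extension_of_le_sublinear φ₀ N N_hom N_add φ₀_le
  refine ⟨φ, φ_le, ?_⟩
  rw [φ_extends ⟨x₀, Submodule.mem_span_singleton_self x₀⟩]
  exact LinearPMap.mkSpanSingleton'_apply_self ..

theorem exists_linearMap_ge_superlinear_eq (N_hom : ∀ c : ℝ, 0 < c → ∀ x, N (c • x) = c * N x)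
    (N_add : ∀ x y, N x + N y ≤ N (x + y)) (x₀ : E) :
    ∃ φ : E →ₗ[ℝ] ℝ, (∀ x, N x ≤ φ x) ∧ φ x₀ = N x₀ := by
  obtain ⟨φ, φ_le, φ_eq⟩ := exists_linearMap_le_sublinear_eq (N := -N)
    (fun c hc x ↦ by simp [N_hom c hc]) (fun x y ↦ by simpa [add_comm] using N_add x y) x₀
  exact ⟨-φ, fun x ↦ le_neg_of_le_neg (φ_le x), neg_eq_iff_eq_neg.mpr φ_eq⟩

end Superlinear

theorem exists_matrix_mulVec_ge_superlinear_eq {m n : Type*} [Fintype n] {L : (n → ℝ) → (m → ℝ)}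
    (L_hom : ∀ c : ℝ, 0 < c → ∀ f, L (c • f) = c • L f)
    (L_add : ∀ f g, L f + L g ≤ L (f + g)) (f : n → ℝ) :
    ∃ A : Matrix m n ℝ, (∀ g, L g ≤ A *ᵥ g) ∧ A *ᵥ f = L f := by
  classical
  choose φ le_φ φ_eq using fun i ↦ exists_linearMap_ge_superlinear_eq (N := fun g ↦ L g i)
    (fun c hc g ↦ congrFun (L_hom c hc g) i) (fun g h ↦ L_add g h i) f
  refine ⟨LinearMap.toMatrix' (LinearMap.pi φ), fun g i ↦ ?_, funext fun i ↦ ?_⟩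
  · simpa only [LinearMap.toMatrix'_mulVec, LinearMap.pi_apply] using le_φ i g
  · simpa only [LinearMap.toMatrix'_mulVec, LinearMap.pi_apply] using φ_eq i

theorem isRateMatrix_iff_mulVec {X : Type*} [Fintype X] [DecidableEq X] {Q : Matrix X X ℝ} :
    IsRateMatrix Q ↔ (∀ x y, x ≠ y → 0 ≤ (Q *ᵥ Pi.single y 1) x) ∧ Q *ᵥ 1 = 0 := by
  have mulVec_one_apply (x : X) : (Q *ᵥ 1) x = ∑ y, Q x y := dotProduct_one (Q x)
  simp [IsRateMatrix, funext_iff, mulVec_one_apply]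

theorem isRateMatrix_of_le_mulVec {X : Type*} [Fintype X] [DecidableEq X]
    {L : (X → ℝ) → (X → ℝ)} {Q : Matrix X X ℝ} (hQ : ∀ g, L g ≤ Q *ᵥ g)
    (L_single : ∀ x y, x ≠ y → 0 ≤ L (Pi.single y 1) x) (L_one : 0 ≤ L 1) (L_neg_one : 0 ≤ L (-1)) :
    IsRateMatrix Q := by
  refine isRateMatrix_iff_mulVec.mpr ⟨fun x y hxy ↦ (L_single x y hxy).trans (hQ _ x), ?_⟩
  have mulVec_one_nonneg : 0 ≤ Q *ᵥ 1 := L_one.trans (hQ 1)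
  have neg_mulVec_one_nonneg : 0 ≤ -(Q *ᵥ 1) := by
    rw [← mulVec_neg]
    exact L_neg_one.trans (hQ (-1))
  exact le_antisymm (neg_nonneg.mp neg_mulVec_one_nonneg) mulVec_one_nonneg

/-- For a lower rate operator `Q̲`, every `f` admits a dominating rate matrix `Q`
(`Q.mulVec g ≥ Q̲ g` for all `g`) that attains `Q̲` at `f`: `Q.mulVec f = Q̲ f`. -/
theorem lowerRateOperator_attained {X : Type*} [Fintype X] [DecidableEq X] [Nontrivial X]
    (L : (X → ℝ) → (X → ℝ))
    (h1 : ∀ (μ : ℝ) (x : X), L (fun _ => μ) x = 0)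
    (h2 : ∀ x y : X, y ≠ x → 0 ≤ L (fun z => if z = y then 1 else 0) x)
    (h3 : ∀ f g : X → ℝ, L f + L g ≤ L (f + g))
    (h4 : ∀ (lam : ℝ), 0 ≤ lam → ∀ f : X → ℝ, L (lam • f) = lam • L f) :
    ∀ f : X → ℝ, ∃ Q : Matrix X X ℝ,
      IsRateMatrix Q ∧ (∀ g : X → ℝ, L g ≤ Q.mulVec g) ∧ Q.mulVec f = L f := by
  intro f
  obtain ⟨Q, le_Q, Q_eq⟩ := exists_matrix_mulVec_ge_superlinear_eq (fun c hc ↦ h4 c hc.le) h3 f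
  have L_single (x y : X) (hxy : x ≠ y) : 0 ≤ L (Pi.single y 1) x := by
    convert h2 x y hxy.symm using 2
    ext z
    exact Pi.single_apply y 1 z
  have L_const (μ : ℝ) : 0 ≤ L (fun _ ↦ μ) := fun x ↦ (h1 μ x).ge
  exact ⟨Q, isRateMatrix_of_le_mulVec le_Q L_single (L_const 1) (L_const (-1)), le_Q, Q_eq⟩
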